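/- (Crapo) Let L be a finite lattice with minimum 0 and maximum 1 that is not complemented, i.e., there exists p ∈ L such that no q ∈ L satisfies both p ∨ q = 1 and p ∧ q = 0. Then μ_L(0,1) = 0. -/

import Mathlib

open scoped Classical

/-- The Möbius function of a finite lattice `L`, as an element of its incidence algebra
(the unique `μ` with `μ ⋆ ζ = δ`), evaluated at a pair of elements. -/
noncomputable def mobius {L : Type*} [Fintype L] [PartialOrder L] (x y : L) : ℝ :=
  letI : LocallyFiniteOrder L := Fintype.toLocallyFiniteOrder
  IncidenceAlgebra.mu ℝ x y

/-!
For `p ∈ [a, b]`, Crapo's complementation formula writes `μ(a, b)` as the sum of `μ(a, x) μ(y, b)`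
over the complements `x ≤ y` of `p` in `[a, b]`; without complements the sum is empty. It comes from
a reciprocity law: expand the indicator of `x ⊔ p = b` as the sum of `μ(z, b)` over
`x ⊔ p ≤ z ≤ b`. As `x ≤ y` and `x ≤ z` say that `x ≤ y ⊓ z`, summing first over `x` turns the sum
of `μ(a, x)` over `x ≤ y`, `x ⊔ p = b` into the sum of `μ(z, b)` over `z ≥ p`, `y ⊓ z = a`.
In the complementation formula this leaves, for each `z ≥ p`, the sum of `μ(y, b)` over
`z ⊓ y = a`, which reciprocity (with `a` for `p`) evaluates to `0` if `z < b` and to `μ(a, b)` if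
`z = b`.
-/

section Lattice

open Finset IncidenceAlgebra

variable {𝕜 L : Type*} [Ring 𝕜] [Lattice L] [LocallyFiniteOrder L] [DecidableEq L]

theorem sum_mu_left_sup_eq_sum_mu_right_inf (a b p y : L) :
    ∑ x ∈ Icc a y with x ⊔ p = b, mu 𝕜 a x = ∑ z ∈ Icc p b with y ⊓ z = a, mu 𝕜 z b := by
  calc ∑ x ∈ Icc a y with x ⊔ p = b, mu 𝕜 a x
      = ∑ x ∈ Icc a y, ∑ z ∈ Icc (x ⊔ p) b, mu 𝕜 a x * mu 𝕜 z b := by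
        simp only [← mul_sum, sum_Icc_mu_left, mul_ite, mul_one, mul_zero, sum_filter]
    _ = ∑ z ∈ Icc p b, ∑ x ∈ Icc a (y ⊓ z), mu 𝕜 a x * mu 𝕜 z b :=
        sum_comm' fun x z => by simp only [mem_Icc, sup_le_iff, le_inf_iff]; tauto
    _ = ∑ z ∈ Icc p b with y ⊓ z = a, mu 𝕜 z b := by
        simp only [← sum_mul, sum_Icc_mu_right, ite_mul, one_mul, zero_mul, sum_filter, eq_comm]

/-- Weisner's theorem, in its dual form. -/
theorem sum_mu_right_inf_eq_ite {b z : L} (a : L) (hzb : z ≤ b) :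
    ∑ y ∈ Icc a b with z ⊓ y = a, mu 𝕜 y b = if z = b then mu 𝕜 a b else 0 := by
  calc ∑ y ∈ Icc a b with z ⊓ y = a, mu 𝕜 y b
      = ∑ x ∈ Icc a z with x ⊔ a = b, mu 𝕜 a x := (sum_mu_left_sup_eq_sum_mu_right_inf ..).symm
    _ = ∑ x ∈ Icc a z, if x = b then mu 𝕜 a x else 0 := by
        rw [sum_filter]
        exact sum_congr rfl fun x hx => by rw [sup_eq_left.2 (mem_Icc.1 hx).1]
    _ = if z = b then mu 𝕜 a b else 0 := by
        by_cases hab : a ≤ b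
        · simp only [sum_ite_eq', mem_Icc, hab, true_and, hzb.ge_iff_eq]
        · simp only [sum_ite_eq', mem_Icc, hab, false_and, apply_eq_zero_of_not_le hab, ite_self]

/-- Crapo's complementation formula: since `x ≤ y`, the two conditions on `x` and `y` together say
that both are complements of `p` in the interval `[a, b]`. -/
theorem sum_compl_mu_mul_mu {a b p : L} (hap : a ≤ p) (hpb : p ≤ b) :
    ∑ y ∈ Icc a b with p ⊓ y = a, ∑ x ∈ Icc a y with x ⊔ p = b, mu 𝕜 a x * mu 𝕜 y b =
      mu 𝕜 a b := by
  have inf_eq_of_le {y z : L} (hy : a ≤ y) (hz : p ≤ z) (h : z ⊓ y = a) : p ⊓ y = a :=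
    le_antisymm (h ▸ inf_le_inf_right y hz) (le_inf hap hy)
  calc ∑ y ∈ Icc a b with p ⊓ y = a, ∑ x ∈ Icc a y with x ⊔ p = b, mu 𝕜 a x * mu 𝕜 y b
      = ∑ y ∈ Icc a b with p ⊓ y = a, ∑ z ∈ Icc p b with y ⊓ z = a, mu 𝕜 z b * mu 𝕜 y b := by
        simp only [← sum_mul, sum_mu_left_sup_eq_sum_mu_right_inf]
    _ = ∑ z ∈ Icc p b, ∑ y ∈ Icc a b with z ⊓ y = a, mu 𝕜 z b * mu 𝕜 y b :=
        sum_comm' fun y z => by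
          simp only [mem_filter, mem_Icc, inf_comm y z]
          exact ⟨fun ⟨hy, hz⟩ => ⟨⟨hy.1, hz.2⟩, hz.1⟩, fun ⟨hy, hz⟩ =>
            ⟨⟨hy.1, inf_eq_of_le hy.1.1 hz.1 hy.2⟩, hz, hy.2⟩⟩
    _ = ∑ z ∈ Icc p b, mu 𝕜 z b * if z = b then mu 𝕜 a b else 0 :=
        sum_congr rfl fun z hz => by
          rw [← mul_sum, sum_mu_right_inf_eq_ite a (mem_Icc.1 hz).2]
    _ = mu 𝕜 a b := by
        simp only [mul_ite, mul_zero, sum_ite_eq', right_mem_Icc, hpb, if_true, mu_self, one_mul]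

theorem crapo_general {a b p : L} (hap : a ≤ p) (hpb : p ≤ b)
    (h : ∀ q : L, ¬(p ⊔ q = b ∧ p ⊓ q = a)) : mu 𝕜 a b = 0 := by
  rw [← sum_compl_mu_mul_mu hap hpb]
  refine sum_eq_zero fun y hy => sum_eq_zero fun x hx => ?_
  obtain ⟨hy, hinf⟩ := mem_filter.1 hy
  obtain ⟨hx, hsup⟩ := mem_filter.1 hx
  have hb : b ≤ p ⊔ y := hsup ▸ sup_comm x p ▸ sup_le_sup_left (mem_Icc.1 hx).2 p
  exact absurd ⟨le_antisymm (sup_le hpb (mem_Icc.1 hy).2) hb, hinf⟩ (h y)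

end Lattice

/-- **Crapo's theorem**: if a finite bounded lattice `L` is not complemented, i.e. some
`p : L` has no complement, then `μ_L(0, 1) = 0`. -/
theorem crapo {L : Type*} [Fintype L] [Lattice L] [BoundedOrder L]
    (h : ∃ p : L, ∀ q : L, ¬(p ⊔ q = ⊤ ∧ p ⊓ q = ⊥)) :
    mobius (⊥ : L) (⊤ : L) = 0 := by
  let : LocallyFiniteOrder L := Fintype.toLocallyFiniteOrder
  exact h.elim fun _ => crapo_general bot_le le_top
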